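/- For all integers N ≥ 0 and h ≥ 1, the odd q-super Catalan numbers satisfy the recurrence C_{N+h,N}(q) = q^h A_{N+h,N}(q) + Σ_{k=0}^{⌊(h-1)/2⌋} C_{k,N}(q) · Σ_{j=k}^{h-k-1} q^{k(N+k+1) + j(N+j+1)} · [h choose 2k+1] · [h-2k-1 choose j-k]. -/

import Mathlib

open Finset

noncomputable section

/-- The variable `q`, as a rational function over `ℚ`. -/
def q : RatFunc ℚ := RatFunc.X

/-- The `q`-integer `[n] = (1 - q^n)/(1 - q)`. -/
def qint (n : ℕ) : RatFunc ℚ := (1 - q ^ n) / (1 - q)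

/-- The `q`-factorial `[n]! = [1][2]⋯[n]`, with `[0]! = 1`. -/
def qfact (n : ℕ) : RatFunc ℚ := ∏ i ∈ Finset.range n, qint (i + 1)

/-- The Gaussian (q-binomial) coefficient `[N choose K]`, equal to
`[N]!/([K]![N-K]!)` if `0 ≤ K ≤ N`, and `0` otherwise. -/
def qbinom (N K : ℤ) : RatFunc ℚ :=
  if 0 ≤ K ∧ K ≤ N then qfact N.toNat / (qfact K.toNat * qfact (N - K).toNat) else 0

/-- The `q`-super Catalan number `A_{m,n}(q) = [2m]! [2n]! / ([m+n]! [m]! [n]!)`. -/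
def A (m n : ℕ) : RatFunc ℚ :=
  qfact (2 * m) * qfact (2 * n) / (qfact (m + n) * qfact m * qfact n)

/-- The odd `q`-super Catalan number
`C_{m,n}(q) = [2m+1]! [2n]! / ([m+n+1]! [m]! [n]!)`. -/
def C (m n : ℕ) : RatFunc ℚ :=
  qfact (2 * m + 1) * qfact (2 * n) / (qfact (m + n + 1) * qfact m * qfact n)

/-!
Exchange the two sums, writing `h = n + 1` and `j + e = n`. For fixed `j`, the factorials in
`C_{k,N} [h choose 2k+1] [h-2k-1 choose j-k]` regroup into a factor free of `k` times
`[j choose k] [N+e+1 choose e-k]`, so the `q`-Vandermonde convolution evaluates the sum over `k`.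
What is left is a multiple of `[N+h choose j] [N+h choose e]`, and a second `q`-Vandermonde
convolution, over `j + e = n`, gives a multiple of `[2N+2h choose h-1]`. This multiple is
`C_{N+h,N} - q^h A_{N+h,N}`, because `[2N+2h+1] = [h] + q^h [2N+h+1]`.
-/

lemma one_sub_q_pow_ne_zero {n : ℕ} (hn : n ≠ 0) : 1 - q ^ n ≠ 0 := by
  have hX : algebraMap (Polynomial ℚ) (RatFunc ℚ) (Polynomial.X ^ n - Polynomial.C 1) ≠ 0 :=
    RatFunc.algebraMap_ne_zero (Polynomial.X_pow_sub_C_ne_zero (Nat.pos_of_ne_zero hn) 1)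
  rw [← neg_sub, neg_ne_zero]
  simpa [q] using hX

lemma qint_ne_zero {n : ℕ} (hn : n ≠ 0) : qint n ≠ 0 :=
  div_ne_zero (one_sub_q_pow_ne_zero hn) (by simpa using one_sub_q_pow_ne_zero one_ne_zero)

lemma qint_add (m n : ℕ) : qint (m + n) = qint m + q ^ m * qint n := by
  simp only [qint, pow_add]
  ring

@[simp]
lemma qfact_zero : qfact 0 = 1 :=
  prod_range_zero _

lemma qfact_succ (n : ℕ) : qfact (n + 1) = qfact n * qint (n + 1) :=
  prod_range_succ _ _

lemma qfact_ne_zero (n : ℕ) : qfact n ≠ 0 :=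
  prod_ne_zero_iff.mpr fun i _ => qint_ne_zero i.succ_ne_zero

lemma qbinom_natCast_add (a b : ℕ) :
    qbinom (a + b : ℕ) a = qfact (a + b) / (qfact a * qfact b) := by
  have hb : (((a + b : ℕ) : ℤ) - a).toNat = b := by omega
  rw [qbinom, if_pos (by omega), hb, Int.toNat_natCast, Int.toNat_natCast]

lemma qbinom_natCast_of_le {n k : ℕ} (hk : k ≤ n) :
    qbinom n k = qfact n / (qfact k * qfact (n - k)) := by
  obtain ⟨b, rfl⟩ := Nat.exists_eq_add_of_le hk
  rw [qbinom_natCast_add, Nat.add_sub_cancel_left]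

lemma qbinom_natCast_of_lt {n k : ℕ} (hk : n < k) : qbinom n k = 0 :=
  if_neg (by omega)

lemma qbinom_natCast_zero (n : ℕ) : qbinom n 0 = 1 := by
  simpa [qfact_ne_zero] using qbinom_natCast_of_le n.zero_le

lemma qbinom_natCast_self (n : ℕ) : qbinom n n = 1 := by
  simp [qbinom_natCast_of_le le_rfl, qfact_ne_zero]

lemma qbinom_natCast_succ_succ (n k : ℕ) :
    qbinom (n + 1 : ℕ) (k + 1 : ℕ) = q ^ (n - k) * qbinom n k + qbinom n (k + 1 : ℕ) := by
  rcases lt_trichotomy n k with hlt | rfl | hgt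
  · simp only [qbinom_natCast_of_lt hlt, qbinom_natCast_of_lt (Nat.succ_lt_succ hlt),
      qbinom_natCast_of_lt (Nat.lt_succ_of_lt hlt), mul_zero, add_zero]
  · rw [qbinom_natCast_self, qbinom_natCast_self, qbinom_natCast_of_lt n.lt_succ_self, Nat.sub_self,
      pow_zero, mul_one, add_zero]
  · obtain ⟨d, hd⟩ := Nat.exists_eq_add_one_of_ne_zero (Nat.sub_ne_zero_of_lt hgt)
    have hd_pred : n - (k + 1) = d := by omega
    have hqint : qint (n + 1) = qint (d + 1) + q ^ (d + 1) * qint (k + 1) := by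
      rw [← qint_add]
      congr 1
      omega
    rw [qbinom_natCast_of_le (Nat.add_le_add_right hgt.le 1), qbinom_natCast_of_le hgt.le,
      qbinom_natCast_of_le hgt, Nat.add_sub_add_right, hd_pred, hd, qfact_succ n,
      qfact_succ k, qfact_succ d, hqint]
    have := qfact_ne_zero k
    have := qfact_ne_zero d
    have := qint_ne_zero k.succ_ne_zero
    have := qint_ne_zero d.succ_ne_zero
    field_simp
    ring

/-- The truncated subtraction `n - p.2` is harmless: `qbinom n p.2 = 0` when `n < p.2`. -/
lemma sum_antidiagonal_qbinom_mul_qbinom (m n r : ℕ) :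
    ∑ p ∈ antidiagonal r, q ^ (p.1 * (n - p.2)) * (qbinom m p.1 * qbinom n p.2) =
      qbinom (m + n : ℕ) r := by
  induction m generalizing r with
  | zero =>
    rw [sum_eq_single_of_mem (0, r) (by simp)]
    · simp only [qbinom_natCast_self, zero_mul, pow_zero, one_mul, zero_add]
    · rintro ⟨i, l⟩ hp hne
      have hi : 0 < i := by
        by_contra! h
        simp_all
      rw [qbinom_natCast_of_lt hi, zero_mul, mul_zero]
  | succ m ih =>
    cases r with
    | zero => 
      rw [Nat.antidiagonal_zero, sum_singleton, Nat.cast_zero]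
      simp only [qbinom_natCast_zero, zero_mul, pow_zero, mul_one]
    | succ r =>
      have hterm (p : ℕ × ℕ) (hp : p ∈ antidiagonal r) :
          q ^ ((p.1 + 1) * (n - p.2)) * (qbinom (m + 1 : ℕ) (p.1 + 1 : ℕ) * qbinom n p.2) =
            q ^ (m + n - r) * (q ^ (p.1 * (n - p.2)) * (qbinom m p.1 * qbinom n p.2)) +
              q ^ ((p.1 + 1) * (n - p.2)) * (qbinom m (p.1 + 1 : ℕ) * qbinom n p.2) := by
        rw [HasAntidiagonal.mem_antidiagonal] at hp
        rw [qbinom_natCast_succ_succ]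
        rcases lt_or_ge m p.1 with hm | hm
        · simp [qbinom_natCast_of_lt hm]
        rcases lt_or_ge n p.2 with hn | hn
        · simp [qbinom_natCast_of_lt hn]
        rw [show m + n - r = (m - p.1) + (n - p.2) by omega]
        ring
      rw [Nat.add_right_comm, qbinom_natCast_succ_succ, ← ih, ← ih,
        Nat.sum_antidiagonal_succ, Nat.sum_antidiagonal_succ, sum_congr rfl hterm,
        sum_add_distrib, mul_sum, Nat.cast_zero, qbinom_natCast_zero, qbinom_natCast_zero]
      ring

lemma sum_range_min_qbinom_mul_qbinom (m n r : ℕ) :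
    ∑ k ∈ range (min m r + 1), q ^ (k * (n - (r - k))) * (qbinom m k * qbinom n (r - k : ℕ)) =
      qbinom (m + n : ℕ) r := by
  rw [← sum_antidiagonal_qbinom_mul_qbinom, Nat.sum_antidiagonal_eq_sum_range_succ
    fun i l => q ^ (i * (n - l)) * (qbinom m i * qbinom n l)]
  refine sum_subset (range_subset_range.mpr (by omega)) fun k hk hkm => ?_
  have hlt : m < k := by
    simp only [mem_range] at hk hkm
    omega
  simp [qbinom_natCast_of_lt hlt]

lemma sum_range_sum_Icc_eq_sum_antidiagonal {M : Type*} [AddCommMonoid M] (f : ℕ → ℕ → M)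
    (n : ℕ) :
    ∑ k ∈ range (n / 2 + 1), ∑ j ∈ Icc k (n - k), f k j =
      ∑ p ∈ antidiagonal n, ∑ k ∈ range (min p.1 p.2 + 1), f k p.1 := by
  rw [Nat.sum_antidiagonal_eq_sum_range_succ_mk]
  refine sum_comm' fun k j => ?_
  simp only [mem_range, mem_Icc]
  omega

lemma C_mul_qbinom_mul_qbinom (N : ℕ) {j e k : ℕ} (hkj : k ≤ j) (hke : k ≤ e) :
    C k N * (qbinom (j + e + 1 : ℕ) (2 * k + 1) *
        qbinom ((j + e + 1 : ℕ) - 2 * k - 1) (j - k)) =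
      qfact (2 * N) * qfact (j + e + 1) / (qfact N * qfact j * qfact (N + e + 1)) *
        (qbinom j k * qbinom (N + e + 1 : ℕ) (e - k : ℕ)) := by
  obtain ⟨a, rfl⟩ := Nat.exists_eq_add_of_le hkj
  obtain ⟨b, rfl⟩ := Nat.exists_eq_add_of_le hke
  rw [show ((k + a + (k + b) + 1 : ℕ) : ℤ) - 2 * k - 1 = (a + b : ℕ) by push_cast; ring,
    show ((k + a : ℕ) : ℤ) - k = a by push_cast; ring,
    show 2 * (k : ℤ) + 1 = (2 * k + 1 : ℕ) by push_cast; ring,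
    show k + a + (k + b) + 1 = (2 * k + 1) + (a + b) by ring,
    show N + (k + b) + 1 = b + (k + N + 1) by ring, Nat.add_sub_cancel_left]
  simp only [qbinom_natCast_add, C]
  field_simp [qfact_ne_zero]

lemma sum_C_mul_qbinom_mul_qbinom (N j e : ℕ) :
    ∑ k ∈ range (min j e + 1), q ^ (k * (N + k + 1)) *
        (C k N * (qbinom (j + e + 1 : ℕ) (2 * k + 1) *
          qbinom ((j + e + 1 : ℕ) - 2 * k - 1) (j - k))) =
      qfact (2 * N) * qfact (j + e + 1) / (qfact N * qfact (N + (j + e) + 1)) *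
        (qbinom (N + (j + e) + 1 : ℕ) j * qbinom (N + (j + e) + 1 : ℕ) e) := by
  calc
    _ = ∑ k ∈ range (min j e + 1),
          qfact (2 * N) * qfact (j + e + 1) / (qfact N * qfact j * qfact (N + e + 1)) *
            (q ^ (k * (N + e + 1 - (e - k))) *
              (qbinom j k * qbinom (N + e + 1 : ℕ) (e - k : ℕ))) := by
      refine sum_congr rfl fun k hk => ?_
      have hk' : k ≤ j ∧ k ≤ e := by
        rw [mem_range] at hk
        omega
      rw [C_mul_qbinom_mul_qbinom N hk'.1 hk'.2, show N + e + 1 - (e - k) = N + k + 1 by omega]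
      ring
    _ = qfact (2 * N) * qfact (j + e + 1) / (qfact N * qfact j * qfact (N + e + 1)) *
          qbinom (j + (N + e + 1) : ℕ) e := by
      rw [← mul_sum, sum_range_min_qbinom_mul_qbinom]
    _ = _ := by
      have hj : N + (j + e) + 1 = j + (N + e + 1) := by ring
      have he : j + (N + e + 1) = e + (N + j + 1) := by ring
      rw [hj, qbinom_natCast_add, he, qbinom_natCast_add]
      field_simp [qfact_ne_zero]

lemma C_eq_q_pow_mul_A_add (N n : ℕ) :
    C (N + n + 1) N = q ^ (n + 1) * A (N + n + 1) N +
      qfact (2 * N) * qfact (n + 1) / (qfact N * qfact (N + n + 1)) *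
        qbinom (N + n + 1 + (N + n + 1) : ℕ) n := by
  have hqint : qint (2 * (N + n + 1) + 1) =
      qint (n + 1) + q ^ (n + 1) * qint (N + n + 1 + N + 1) := by
    rw [← qint_add]
    congr 1
    ring
  have hbinom : N + n + 1 + (N + n + 1) = n + (N + n + 1 + N + 1) := by ring
  have htwo : n + (N + n + 1 + N + 1) = 2 * (N + n + 1) := by ring
  rw [hbinom, qbinom_natCast_add, htwo, C, A, qfact_succ (2 * (N + n + 1)), hqint,
    qfact_succ (N + n + 1 + N), qfact_succ n]
  have := qint_ne_zero (N + n + 1 + N).succ_ne_zero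
  field_simp [qfact_ne_zero]
  ring

/-- For all integers `N ≥ 0` and `h ≥ 1`,
`C_{N+h,N}(q) = q^h A_{N+h,N}(q) + Σ_{k=0}^{⌊(h-1)/2⌋} C_{k,N}(q)
  Σ_{j=k}^{h-k-1} q^{k(N+k+1)+j(N+j+1)} [h choose 2k+1] [h-2k-1 choose j-k]`. -/
theorem forward_recurrence (N h : ℕ) (hh : 1 ≤ h) :
    C (N + h) N =
      q ^ h * A (N + h) N +
        ∑ k ∈ Finset.range ((h - 1) / 2 + 1),
          C k N *
            ∑ j ∈ Finset.Icc k (h - k - 1),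
              q ^ (k * (N + k + 1) + j * (N + j + 1)) *
                qbinom (h : ℤ) (2 * (k : ℤ) + 1) *
                qbinom ((h : ℤ) - 2 * k - 1) ((j : ℤ) - k) := by
  obtain ⟨n, rfl⟩ := Nat.exists_eq_add_of_le' hh
  have hsub (k : ℕ) : n + 1 - k - 1 = n - k := by omega
  simp only [Nat.add_sub_cancel, hsub, mul_sum]
  rw [sum_range_sum_Icc_eq_sum_antidiagonal, ← add_assoc, C_eq_q_pow_mul_A_add,
    ← sum_antidiagonal_qbinom_mul_qbinom, mul_sum]
  congr 1
  refine sum_congr rfl ?_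
  rintro ⟨j, e⟩ hje
  obtain rfl := HasAntidiagonal.mem_antidiagonal.mp hje
  have hexp : N + (j + e) + 1 - e = N + j + 1 := by omega
  rw [hexp, mul_left_comm, ← sum_C_mul_qbinom_mul_qbinom, mul_sum]
  refine sum_congr rfl fun k _ => ?_
  rw [pow_add]
  ring

end
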